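/- Let N ≥ 2 and let A : ℤ_N → ℕ be a multiset with positive total mass such that Φ_N(X) ∣ A(X). Let p be a prime with p^α ∥ N, α ≥ 1, and let D(N) := N / rad(N), where rad(N) is the product of the distinct primes dividing N. Then at least one of the following holds: (1) the product Φ_N(X)·Φ_{N/p}(X)⋯Φ_{N/p^α}(X) divides A(X); or (2) there exists a ∈ ℤ_N with A(a) > 0 such that for every ν ∈ {0, 1, …, p−1} there exists x ∈ ℤ_N with A(x) > 0 and x ≡ a + ν N/p (mod p·D(N)). -/

import Mathlib

open Polynomial

/-- Mask polynomial of a multiset (weight function) on `ZMod N`: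
`A(X) = ∑_{x ∈ ℤ_N} w(x) · X^{x.val}`. -/
noncomputable def wmaskPoly (N : ℕ) (w : ZMod N → ℕ) : Polynomial ℤ :=
  ∑ i ∈ Finset.range N, C ((w (i : ZMod N)) : ℤ) * X ^ i

/-- Total mass `∑_x w(x)` of a multiset on `ZMod N`. -/
def wmass (N : ℕ) (w : ZMod N → ℕ) : ℕ :=
  ∑ i ∈ Finset.range N, w (i : ZMod N)

/-!
Write `N = D · rad N` and `rad N = m p` with `p ∤ m`. Since `Φ_N(X) = Φ_{mp}(X^D)`, splitting the
exponents of `A` modulo `D` gives polynomials `B`, each divisible by `Φ_{mp}`. If the cuboid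
alternative fails, every nonzero `B` has a residue class mod `p` free of exponents. Let `ω` and `ζ`
be primitive roots of unity of orders `p` and `m`. The Fourier sum over `ω^a ζ` that picks out this
class is zero, and so are its terms with `a ≠ 0`; the term left over says `B(ζ) = 0`. Hence
`Φ_{mp}(X) Φ_m(X) = Φ_m(X^p)` divides `B`, so `Φ_m(X^{pD})` divides `A`, and the latter is
divisible by every `Φ_{N/p^β}` with `p^β ∣ N`.
-/

open UniqueFactorizationMonoid (radical radical_dvd_self squarefree_radical
  dvd_radical_iff_of_irreducible)

section ResidueComponent

variable {R : Type*} [CommSemiring R]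

/-- The component `A_c` of `A` along the exponents `≡ c` modulo `q`, with coefficients
`A_c[j] = A[q j + c]`: for `q ≠ 0` it is characterised by `A(X) = ∑_{c < q} X^c A_c(X^q)`. It
carries the restriction of a multiset to a coset of `q ℤ_N`, in the variable `X^q`. -/
noncomputable def residueComponent (q c : ℕ) (A : R[X]) : R[X] :=
  contract q (divX^[c] A)

lemma coeff_iterate_divX (A : R[X]) (c n : ℕ) : (divX^[c] A).coeff n = A.coeff (n + c) := by
  induction c generalizing n with
  | zero => rfl
  | succ c ih => rw [Function.iterate_succ_apply', coeff_divX, ih, add_right_comm, add_assoc]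

lemma coeff_residueComponent {q : ℕ} (hq : q ≠ 0) (c : ℕ) (A : R[X]) (j : ℕ) :
    (residueComponent q c A).coeff j = A.coeff (j * q + c) := by
  rw [residueComponent, coeff_contract hq, coeff_iterate_divX]

lemma coeff_sum_X_pow_mul_expand (F : ℕ → R[X]) {q c : ℕ} (hc : c < q) (j : ℕ) :
    (∑ d ∈ Finset.range q, X ^ d * expand R q (F d)).coeff (j * q + c) = (F c).coeff j := by
  have hq : 0 < q := by lia
  rw [finsetSum_coeff, Finset.sum_eq_single_of_mem c (Finset.mem_range.mpr hc)]
  · rw [coeff_X_pow_mul, coeff_expand_mul hq]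
  · intro d hd hdc
    rw [coeff_X_pow_mul', ite_eq_right_iff]
    intro hle
    rw [coeff_expand hq, if_neg]
    intro hdvd
    have hmod : d ≡ c [MOD q] :=
      ((Nat.modEq_iff_dvd' hle).mpr hdvd).trans (by simp [Nat.ModEq])
    exact hdc (hmod.eq_of_lt_of_lt (Finset.mem_range.mp hd) hc)

lemma sum_X_pow_mul_expand_residueComponent {q : ℕ} (hq : q ≠ 0) (A : R[X]) :
    ∑ c ∈ Finset.range q, X ^ c * expand R q (residueComponent q c A) = A := by
  ext n
  conv_lhs => rw [← Nat.div_add_mod' n q]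
  rw [coeff_sum_X_pow_mul_expand _ (Nat.mod_lt _ (Nat.pos_of_ne_zero hq)),
    coeff_residueComponent hq, Nat.div_add_mod']

lemma residueComponent_expand_mul {q c : ℕ} (hc : c < q) (P B : R[X]) :
    residueComponent q c (expand R q P * B) = P * residueComponent q c B := by
  have hq : q ≠ 0 := by lia
  have hsum : expand R q P * B =
      ∑ d ∈ Finset.range q, X ^ d * expand R q (P * residueComponent q d B) := by
    conv_lhs => rw [← sum_X_pow_mul_expand_residueComponent hq B, Finset.mul_sum]
    exact Finset.sum_congr rfl fun d _ => by rw [map_mul, mul_left_comm]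
  ext j
  rw [coeff_residueComponent hq, hsum, coeff_sum_X_pow_mul_expand _ hc]

lemma expand_dvd_iff_forall_dvd_residueComponent {q : ℕ} (hq : q ≠ 0) {P A : R[X]} :
    expand R q P ∣ A ↔ ∀ c < q, P ∣ residueComponent q c A := by
  constructor
  · rintro ⟨B, rfl⟩ c hc
    exact ⟨_, residueComponent_expand_mul hc P B⟩
  · intro h
    rw [← sum_X_pow_mul_expand_residueComponent hq A]
    exact Finset.dvd_sum fun c hc =>
      (_root_.map_dvd (expand R q) (h c (Finset.mem_range.mp hc))).mul_left _

end ResidueComponent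

section RootsOfUnity

lemma isPrimitiveRoot_mul_of_coprime {M : Type*} [CommMonoid M] {x y : M} {a b : ℕ}
    (hx : IsPrimitiveRoot x a) (hy : IsPrimitiveRoot y b) (hab : a.Coprime b) :
    IsPrimitiveRoot (x * y) (a * b) := by
  rw [hx.eq_orderOf, hy.eq_orderOf] at hab ⊢
  rw [← (Commute.all x y).orderOf_mul_eq_mul_orderOf_of_coprime hab]
  exact IsPrimitiveRoot.orderOf _

variable {K : Type*} [CommRing K] [IsDomain K] {ω : K} {q : ℕ}

lemma geom_sum_pow_of_isPrimitiveRoot (hω : IsPrimitiveRoot ω q) (k : ℕ) :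
    ∑ a ∈ Finset.range q, (ω ^ k) ^ a = if q ∣ k then (q : K) else 0 := by
  split_ifs with hk
  · simp [(hω.pow_eq_one_iff_dvd k).mpr hk]
  · have hne : 1 - ω ^ k ≠ 0 := sub_ne_zero.mpr fun h => hk ((hω.pow_eq_one_iff_dvd k).mp h.symm)
    refine (mul_eq_zero.mp ?_).resolve_left hne
    rw [mul_neg_geom_sum, pow_right_comm, hω.pow_eq_one, one_pow, sub_self]

lemma sum_root_pow_mul_aeval {R : Type*} [CommSemiring R] [Algebra R K]
    (hω : IsPrimitiveRoot ω q) (x : K) (A : R[X]) {r : ℕ} (hr : r < q) :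
    ∑ a ∈ Finset.range q, (ω ^ (q - r)) ^ a * aeval (ω ^ a * x) A =
      q * (x ^ r * aeval (x ^ q) (residueComponent q r A)) := by
  have hexpand (a : ℕ) : aeval (ω ^ a * x) A =
      ∑ c ∈ Finset.range q, (ω ^ a) ^ c * (x ^ c * aeval (x ^ q) (residueComponent q c A)) := by
    conv_lhs => rw [← sum_X_pow_mul_expand_residueComponent (by lia : q ≠ 0) A]
    simp only [map_sum, map_mul, map_pow, aeval_X, expand_aeval, mul_pow, pow_right_comm ω a q,
      hω.pow_eq_one, one_pow, one_mul, mul_assoc]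
  have horth : ∀ c < q, ∑ a ∈ Finset.range q, (ω ^ (q - r)) ^ a * (ω ^ a) ^ c =
      if c = r then (q : K) else 0 := by
    intro c hc
    have hdvd : q ∣ q - r + c ↔ c = r := by
      rw [show q - r + c = c + q - r by lia, ← Nat.modEq_iff_dvd' (by lia)]
      exact ⟨fun h => (h.trans (by simp [Nat.ModEq])).symm.eq_of_lt_of_lt hc hr,
        fun h => by simp [h, Nat.ModEq]⟩
    simp only [← hdvd, ← geom_sum_pow_of_isPrimitiveRoot hω, pow_right_comm ω _ c, ← mul_pow,
      ← pow_add]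
  calc
    _ = ∑ c ∈ Finset.range q, (∑ a ∈ Finset.range q, (ω ^ (q - r)) ^ a * (ω ^ a) ^ c) *
          (x ^ c * aeval (x ^ q) (residueComponent q c A)) := by
      simp only [hexpand, Finset.mul_sum, Finset.sum_mul, mul_assoc]
      exact Finset.sum_comm
    _ = ∑ c ∈ Finset.range q, (if c = r then (q : K) else 0) *
          (x ^ c * aeval (x ^ q) (residueComponent q c A)) :=
      Finset.sum_congr rfl fun c hc => by rw [horth c (Finset.mem_range.mp hc)]
    _ = q * (x ^ r * aeval (x ^ q) (residueComponent q r A)) := by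
      simp [ite_mul, hr]

end RootsOfUnity

section Cyclotomic

lemma expand_cyclotomic_of_forall_prime_dvd (R : Type*) [CommRing R] {n q : ℕ} (hq : q ≠ 0)
    (h : ∀ r, r.Prime → r ∣ q → r ∣ n) :
    expand R q (cyclotomic n R) = cyclotomic (n * q) R := by
  induction q using Nat.recOnMul generalizing n with
  | zero => exact absurd rfl hq
  | one => rw [expand_one, mul_one]
  | prime q hq' => exact cyclotomic_expand_eq_cyclotomic hq' (h q hq' dvd_rfl) R
  | mul a b iha ihb =>
    rw [expand_mul, ihb (right_ne_zero_of_mul hq) fun r hr hrb => h r hr (hrb.mul_left a),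
      iha (left_ne_zero_of_mul hq) fun r hr hra => (h r hr (hra.mul_right b)).mul_right b,
      mul_assoc, mul_comm b]

lemma cyclotomic_dvd_iff_aeval_eq_zero {K : Type*} [Field K] [CharZero K] {n : ℕ} (hn : 0 < n)
    {y : K} (hy : IsPrimitiveRoot y n) {P : ℤ[X]} : cyclotomic n ℤ ∣ P ↔ aeval y P = 0 := by
  rw [cyclotomic_eq_minpoly hy hn, minpoly.isIntegrallyClosed_dvd_iff (hy.isIntegral hn)]

lemma isRelPrime_cyclotomic {a b : ℕ} (ha : 0 < a) (hb : 0 < b) (hab : a ≠ b) :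
    IsRelPrime (cyclotomic a ℤ) (cyclotomic b ℤ) := by
  rw [(cyclotomic.irreducible ha).isRelPrime_iff_not_dvd,
    (cyclotomic.irreducible ha).dvd_irreducible_iff_associated (cyclotomic.irreducible hb)]
  exact fun h => hab <| cyclotomic_injective <|
    eq_of_monic_of_associated (cyclotomic.monic a ℤ) (cyclotomic.monic b ℤ) h

lemma cyclotomic_dvd_expand_cyclotomic {n q : ℕ} (hn : 0 < n) (hq : q ≠ 0) :
    cyclotomic n ℤ ∣ expand ℤ q (cyclotomic (n / n.gcd q) ℤ) := by
  obtain ⟨y, hy⟩ : ∃ y : ℂ, IsPrimitiveRoot y n := ⟨_, Complex.isPrimitiveRoot_exp n hn.ne'⟩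
  have hyq : IsPrimitiveRoot (y ^ q) (n / n.gcd q) := by
    rw [IsPrimitiveRoot.iff_orderOf, orderOf_pow' y hq, ← hy.eq_orderOf]
  rw [cyclotomic_dvd_iff_aeval_eq_zero hn hy, expand_aeval,
    ← cyclotomic_dvd_iff_aeval_eq_zero (Nat.div_gcd_pos_of_pos_left q hn) hyq]

lemma cyclotomic_dvd_of_residueComponent_eq_zero {p m r : ℕ} (hp : p.Prime) (hpm : ¬p ∣ m)
    {B : ℤ[X]} (hB : cyclotomic (m * p) ℤ ∣ B) (hr : r < p)
    (hzero : residueComponent p r B = 0) : cyclotomic m ℤ ∣ B := by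
  have hm : m ≠ 0 := by rintro rfl; exact hpm (dvd_zero p)
  obtain ⟨ω, hω⟩ : ∃ ω : ℂ, IsPrimitiveRoot ω p := ⟨_, Complex.isPrimitiveRoot_exp p hp.ne_zero⟩
  obtain ⟨ζ, hζ⟩ : ∃ ζ : ℂ, IsPrimitiveRoot ζ m := ⟨_, Complex.isPrimitiveRoot_exp m hm⟩
  have hvanish : ∀ a ∈ Finset.range p, a ≠ 0 → (ω ^ (p - r)) ^ a * aeval (ω ^ a * ζ) B = 0 := by
    intro a ha ha0
    have hωa : IsPrimitiveRoot (ω ^ a) p := hω.pow_of_coprime a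
      (Nat.coprime_of_lt_prime ha0 (Finset.mem_range.mp ha) hp).symm
    have hroot := isPrimitiveRoot_mul_of_coprime hωa hζ (hp.coprime_iff_not_dvd.mpr hpm)
    rw [mul_comm p m] at hroot
    have hmp : 0 < m * p := Nat.mul_pos (Nat.pos_of_ne_zero hm) hp.pos
    rw [(cyclotomic_dvd_iff_aeval_eq_zero hmp hroot).mp hB, mul_zero]
  have hsum := sum_root_pow_mul_aeval hω ζ B hr
  rw [Finset.sum_eq_single_of_mem 0 (Finset.mem_range.mpr hp.pos) hvanish] at hsum
  rw [cyclotomic_dvd_iff_aeval_eq_zero (Nat.pos_of_ne_zero hm) hζ]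
  simpa [hzero] using hsum

lemma expand_cyclotomic_dvd_of_residueComponent_eq_zero {p m r : ℕ} (hp : p.Prime) (hpm : ¬p ∣ m)
    {B : ℤ[X]} (hB : cyclotomic (m * p) ℤ ∣ B) (hr : r < p)
    (hzero : residueComponent p r B = 0) : expand ℤ p (cyclotomic m ℤ) ∣ B := by
  have hm : 0 < m := Nat.pos_of_ne_zero (by rintro rfl; exact hpm (dvd_zero p))
  rw [cyclotomic_expand_eq_cyclotomic_mul hp hpm]
  have hne : m * p ≠ m := ((Nat.lt_mul_iff_one_lt_right hm).mpr hp.one_lt).ne'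
  exact (isRelPrime_cyclotomic (Nat.mul_pos hm hp.pos) hm hne).mul_dvd hB
    (cyclotomic_dvd_of_residueComponent_eq_zero hp hpm hB hr hzero)

lemma prod_cyclotomic_div_prime_pow_dvd {N p α : ℕ} (hN : N ≠ 0) (hp : p.Prime)
    (hpd : p ^ α ∣ N) {A : ℤ[X]} (h : ∀ β ≤ α, cyclotomic (N / p ^ β) ℤ ∣ A) :
    ∏ β ∈ Finset.range (α + 1), cyclotomic (N / p ^ β) ℤ ∣ A := by
  have hdvd {β : ℕ} (hβ : β ∈ Finset.range (α + 1)) : p ^ β ∣ N :=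
    (pow_dvd_pow p (Finset.mem_range_succ_iff.mp hβ)).trans hpd
  have hpos {β : ℕ} (hβ : β ∈ Finset.range (α + 1)) : 0 < N / p ^ β :=
    Nat.div_pos (Nat.le_of_dvd (Nat.pos_of_ne_zero hN) (hdvd hβ)) (pow_pos hp.pos β)
  refine Finset.prod_dvd_of_isRelPrime (fun β hβ γ hγ hne => ?_)
    fun β hβ => h β (Finset.mem_range_succ_iff.mp hβ)
  exact isRelPrime_cyclotomic (hpos hβ) (hpos hγ) fun heq => hne <|
    Nat.pow_right_injective hp.two_le <|
      (Nat.div_eq_iff_eq_of_dvd_dvd hN (hdvd hβ) (hdvd hγ)).mp heq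

end Cyclotomic

section Cuboid

lemma expand_cyclotomic_dvd_of_exists_empty_class {p m D : ℕ} (hp : p.Prime) (hpm : ¬p ∣ m)
    (hD : D ≠ 0) {A : ℤ[X]} (hA : expand ℤ D (cyclotomic (m * p) ℤ) ∣ A)
    (hempty : ∀ a ∈ A.support, ∃ k, ∀ x ∈ A.support, ¬x ≡ a + k * D [MOD p * D]) :
    expand ℤ (D * p) (cyclotomic m ℤ) ∣ A := by
  rw [expand_mul, expand_dvd_iff_forall_dvd_residueComponent hD]
  rw [expand_dvd_iff_forall_dvd_residueComponent hD] at hA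
  intro c hc
  rcases eq_or_ne (residueComponent D c A) 0 with hzero | hne
  · exact hzero ▸ dvd_zero _
  obtain ⟨j, hj⟩ := nonempty_support_iff.mpr hne
  rw [mem_support_iff, coeff_residueComponent hD] at hj
  obtain ⟨k, hk⟩ := hempty _ (mem_support_iff.mpr hj)
  refine expand_cyclotomic_dvd_of_residueComponent_eq_zero hp hpm (hA c hc)
    (Nat.mod_lt (j + k) hp.pos) ?_
  ext i
  rw [coeff_residueComponent hp.ne_zero, coeff_residueComponent hD, coeff_zero]
  refine notMem_support_iff.mp fun hi => hk _ hi ?_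
  have hmod : i * p + (j + k) % p ≡ j + k [MOD p] := by simp [Nat.ModEq]
  convert (hmod.mul_right' D).add_right c using 1
  ring

lemma radical_eq_mul_of_prime_dvd {N p : ℕ} (hN : N ≠ 0) (hp : p.Prime) (hpN : p ∣ N) :
    ∃ m, ¬p ∣ m ∧ radical N = m * p := by
  obtain ⟨m, hm⟩ : p ∣ radical N :=
    (dvd_radical_iff_of_irreducible hp.prime.irreducible hN).mpr hpN
  have hsq : Squarefree (radical N) := squarefree_radical
  refine ⟨m, fun hpm => hp.prime.not_isUnit (hsq p ?_), hm.trans (mul_comm p m)⟩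
  exact hm ▸ mul_dvd_mul_left p hpm

lemma cyclotomic_eq_expand_cyclotomic_radical (R : Type*) [CommRing R] {N : ℕ} (hN : N ≠ 0) :
    cyclotomic N R = expand R (N / radical N) (cyclotomic (radical N) R) := by
  have hNe : radical N * (N / radical N) = N := Nat.mul_div_cancel' radical_dvd_self
  have hprime (r : ℕ) (hr : r.Prime) (hrD : r ∣ N / radical N) : r ∣ radical N :=
    (dvd_radical_iff_of_irreducible hr.prime.irreducible hN).mpr
      (hrD.trans (Nat.div_dvd_of_dvd radical_dvd_self))
  rw [expand_cyclotomic_of_forall_prime_dvd R (right_ne_zero_of_mul (hNe ▸ hN)) hprime, hNe]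

lemma cyclotomic_div_prime_pow_dvd_expand {p m q β N : ℕ} (hp : p.Prime) (hpm : ¬p ∣ m)
    (hN : N ≠ 0) (hNq : N = m * q) (hβ : p ^ β ∣ N) :
    cyclotomic (N / p ^ β) ℤ ∣ expand ℤ q (cyclotomic m ℤ) := by
  have hcop : m.Coprime (p ^ β) := ((hp.coprime_iff_not_dvd.mpr hpm).pow_left β).symm
  obtain ⟨d, rfl⟩ : p ^ β ∣ q := hcop.symm.dvd_of_dvd_mul_left (hNq ▸ hβ)
  have hn : N / p ^ β = m * d :=
    Nat.div_eq_of_eq_mul_right (pow_pos hp.pos β) (by rw [hNq]; ring)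
  have hd : 0 < d := Nat.pos_of_ne_zero (by rintro rfl; simp [hNq] at hN)
  have hm : 0 < m := Nat.pos_of_ne_zero (by rintro rfl; simp [hNq] at hN)
  have hquot : m * d / (m * d).gcd (p ^ β * d) = m := by
    rw [Nat.gcd_mul_right, hcop.gcd_eq_one, one_mul, Nat.mul_div_cancel m hd]
  rw [hn]
  simpa only [hquot] using cyclotomic_dvd_expand_cyclotomic (Nat.mul_pos hm hd) (q := p ^ β * d)
    (by have := hp.pos; positivity)

theorem cuboid_dichotomy_general {N : ℕ} (hN : N ≠ 0) {A : ℤ[X]} (hΦ : cyclotomic N ℤ ∣ A)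
    {p α : ℕ} (hp : p.Prime) (hα : 1 ≤ α) (hpd : p ^ α ∣ N) :
    ((∏ β ∈ Finset.range (α + 1), cyclotomic (N / p ^ β) ℤ) ∣ A) ∨
    (∃ a ∈ A.support, ∀ ν ∈ Finset.range p, ∃ x ∈ A.support,
      x ≡ a + ν * (N / p) [MOD p * (N / radical N)]) := by
  rw [or_iff_not_imp_right]
  intro hcuboid
  push Not at hcuboid
  obtain ⟨m, hpm, hrad⟩ :=
    radical_eq_mul_of_prime_dvd hN hp ((dvd_pow_self p (by lia)).trans hpd)
  rw [cyclotomic_eq_expand_cyclotomic_radical ℤ hN] at hΦ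
  have hNe : N / radical N * radical N = N := Nat.div_mul_cancel radical_dvd_self
  have hD : N / radical N ≠ 0 := left_ne_zero_of_mul (hNe ▸ hN)
  set D := N / radical N
  rw [hrad] at hΦ hNe
  have hNp : N / p = m * D := Nat.div_eq_of_eq_mul_left hp.pos (by rw [← hNe]; ring)
  have hA : expand ℤ (D * p) (cyclotomic m ℤ) ∣ A := by
    refine expand_cyclotomic_dvd_of_exists_empty_class hp hpm hD hΦ fun a ha => ?_
    obtain ⟨ν, -, hν⟩ := hcuboid a ha
    exact ⟨ν * m, by rwa [mul_assoc, ← hNp]⟩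
  exact prod_cyclotomic_div_prime_pow_dvd hN hp hpd fun β hβ =>
    (cyclotomic_div_prime_pow_dvd_expand hp hpm hN (by rw [← hNe]; ring)
      ((pow_dvd_pow p hβ).trans hpd)).trans hA

end Cuboid

lemma pos_of_mem_support_wmaskPoly {N : ℕ} {w : ZMod N → ℕ} {i : ℕ}
    (hi : i ∈ (wmaskPoly N w).support) : 0 < w i := by
  refine Nat.pos_of_ne_zero fun hwi => mem_support_iff.mp hi ?_
  simp [wmaskPoly, coeff_X_pow, hwi]

lemma exists_natCast_eq_add_mul_of_modEq (R : Type*) [Ring R] {n x y : ℕ} (h : x ≡ y [MOD n]) :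
    ∃ c : R, (x : R) = y + n * c := by
  obtain ⟨c, hc⟩ := h.symm.dvd
  refine ⟨c, eq_add_of_sub_eq' ?_⟩
  exact_mod_cast congrArg (Int.cast : ℤ → R) hc

lemma exists_pos_of_exists_mem_support_wmaskPoly {N n y : ℕ} {w : ZMod N → ℕ}
    (h : ∃ x ∈ (wmaskPoly N w).support, x ≡ y [MOD n]) :
    ∃ x : ZMod N, 0 < w x ∧ ∃ c : ZMod N, x = y + n * c := by
  obtain ⟨x, hx, hxy⟩ := h
  exact ⟨x, pos_of_mem_support_wmaskPoly hx, exists_natCast_eq_add_mul_of_modEq (ZMod N) hxy⟩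

/-- Proposition 5.1 (multiscale cuboid dichotomy): if `Φ_N ∣ A(X)` and `p^α ∥ N`, then
either `Φ_N Φ_{N/p} ⋯ Φ_{N/p^α} ∣ A(X)`, or there is `a` in the support of `A` such that
for every `ν ∈ {0,…,p-1}` the support of `A` meets the coset
`a + ν N/p + (p·D(N))·ℤ_N`, where `D(N) = N / rad(N)`. -/
theorem cuboid_dichotomy (N : ℕ) (hN : 2 ≤ N) (w : ZMod N → ℕ) (hw : 0 < wmass N w)
    (hΦ : cyclotomic N ℤ ∣ wmaskPoly N w)
    (p α : ℕ) (hp : p.Prime) (hα : 1 ≤ α) (hpd : p ^ α ∣ N) (hpn : ¬ p ^ (α + 1) ∣ N) :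
    ((∏ β ∈ Finset.range (α + 1), cyclotomic (N / p ^ β) ℤ) ∣ wmaskPoly N w) ∨
    (∃ a : ZMod N, 0 < w a ∧ ∀ ν ∈ Finset.range p, ∃ x : ZMod N, 0 < w x ∧
      ∃ c : ZMod N,
        x = a + ((ν * (N / p) : ℕ) : ZMod N) +
          ((p * (N / ∏ r ∈ N.primeFactors, r) : ℕ) : ZMod N) * c) := by
  rw [← Nat.radical_eq_prod_primeFactors]
  exact (cuboid_dichotomy_general (by lia) hΦ hp hα hpd).imp_right fun ⟨a, ha, h⟩ =>
    ⟨a, pos_of_mem_support_wmaskPoly ha, fun ν hν => by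
      simpa only [Nat.cast_add] using exists_pos_of_exists_mem_support_wmaskPoly (h ν hν)⟩
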